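/- arXiv:1410.7229 — 4 statements merged into one kernel-verified Lean document; each statement's English description precedes it below -/
import Mathlib

section
/- Let l ≥ 1 and let E = EuclideanSpace ℝ (Fin l). For t > 0 define the Gaussian heat kernel p_t(x,y) = (2πt)^(−l/2) · exp(−‖y−x‖²/(2t)) for x, y ∈ E. Then for every linear isometric equivalence w of E, every α ∈ E, all real numbers s and c, every t > 0 and all x, y ∈ E one has p_t(w x + s • α, w y + (s + t·c) • α) = exp(−c·⟪α, w (y−x)⟫ − (t·c²/2)·‖α‖²) · p_t(x, y). -/
open Real
open scoped RealInnerProductSpace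

/-- The Gaussian heat kernel `p_t(x,y) = (2πt)^(−l/2) · exp(−‖y−x‖²/(2t))`
on `EuclideanSpace ℝ (Fin l)`. -/
noncomputable def heatKernel (l : ℕ) (t : ℝ) (x y : EuclideanSpace ℝ (Fin l)) : ℝ :=
  (2 * Real.pi * t) ^ (-(l : ℝ) / 2) * Real.exp (-‖y - x‖ ^ 2 / (2 * t))

/-- Lemma 5.5 (Wonpt): transformation of the Gaussian heat kernel under the projected
action of an affine Weyl group element. -/
theorem heatKernel_affine_transform (l : ℕ) (hl : 1 ≤ l)
    (w : EuclideanSpace ℝ (Fin l) ≃ₗᵢ[ℝ] EuclideanSpace ℝ (Fin l))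
    (α : EuclideanSpace ℝ (Fin l)) (s c : ℝ) (t : ℝ) (ht : 0 < t)
    (x y : EuclideanSpace ℝ (Fin l)) :
    heatKernel l t (w x + s • α) (w y + (s + t * c) • α)
      = Real.exp (-c * ⟪α, w (y - x)⟫ - t * c ^ 2 / 2 * ‖α‖ ^ 2) * heatKernel l t x y := by
  -- The displacement becomes `w (y - x) + t c α`, and `w` preserves norms.
  have hd : w y + (s + t * c) • α - (w x + s • α) = w (y - x) + (t * c) • α := by
    rw [map_sub]
    module
  have hn : ‖w (y - x) + (t * c) • α‖ ^ 2
      = ‖y - x‖ ^ 2 + 2 * (t * c) * ⟪α, w (y - x)⟫ + (t * c) ^ 2 * ‖α‖ ^ 2 := by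
    rw [norm_add_sq_real, w.norm_map, inner_smul_right, real_inner_comm, norm_smul, mul_pow,
      Real.norm_eq_abs, sq_abs]
    ring
  unfold heatKernel
  rw [hd, hn, mul_left_comm (Real.exp _), ← Real.exp_add]
  congr 2
  field_simp
  ring
end

section
/- Let l ≥ 1 and let E = EuclideanSpace ℝ (Fin l). For t > 0 define p_t(x,y) = (2πt)^(−l/2) · exp(−‖y−x‖²/(2t)). Let w be a linear isometric equivalence of E, α ∈ E, s, c ∈ ℝ, t > 0, and x, y ∈ E. If the space-time point (s, x) is fixed by the affine transformation, i.e. w x + s • α = x, then p_t(x, w y + (s + t·c) • α) = exp(−c·⟪α, w (y−x)⟫ − (t·c²/2)·‖α‖²) · p_t(x, y). -/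
/-!
Since `w x + s • α = x`, the displacement from `x` to the image of `y` is
`w (y - x) + (t * c) • α`: the wall condition absorbs the level `s`. As `w` is an isometry,
expanding the squared norm gives `‖y - x‖²` plus a cross term and a multiple of `‖α‖²`;
divided by `-2t`, these two extra terms are the claimed exponent.
-/

open Real
open scoped RealInnerProductSpace

/-- The key reflection step in Lemma 5.4 (reflectionsansdrift): if the space-time point
`(s, x)` is fixed by the affine transformation `(a, z) ↦ (a, w z + a • α)`, then the heat
kernel from `x` to a point `y` at level `s + t·c` and to its reflected image differ by an
explicit exponential factor. -/
theorem heatKernel_reflection_at_wall (l : ℕ) (hl : 1 ≤ l)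
    (w : EuclideanSpace ℝ (Fin l) ≃ₗᵢ[ℝ] EuclideanSpace ℝ (Fin l))
    (α : EuclideanSpace ℝ (Fin l)) (s c : ℝ) (t : ℝ) (ht : 0 < t)
    (x y : EuclideanSpace ℝ (Fin l))
    (hfix : w x + s • α = x) :
    heatKernel l t x (w y + (s + t * c) • α)
      = Real.exp (-c * ⟪α, w (y - x)⟫ - t * c ^ 2 / 2 * ‖α‖ ^ 2) * heatKernel l t x y := by
  have hdisp : w y + (s + t * c) • α - x = w (y - x) + (t * c) • α := by
    rw [map_sub, add_smul]
    nth_rewrite 1 [← hfix]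
    abel
  have hnorm : ‖w y + (s + t * c) • α - x‖ ^ 2
      = ‖y - x‖ ^ 2 + 2 * (t * c * ⟪α, w (y - x)⟫) + (t * c) ^ 2 * ‖α‖ ^ 2 := by
    rw [hdisp, norm_add_sq_real, w.norm_map, real_inner_smul_right, real_inner_comm, norm_smul,
      mul_pow, Real.norm_eq_abs, sq_abs]
  unfold heatKernel
  rw [hnorm, mul_left_comm (Real.exp _), ← Real.exp_add]
  congr 2
  field_simp
  ring
end

section
/- Let l ≥ 1 and let E = EuclideanSpace ℝ (Fin l). For t > 0 define p_t(x,y) = (2πt)^(−l/2) · exp(−‖y−x‖²/(2t)). Then for every linear isometric equivalence w of E, every α ∈ E, all s, c ∈ ℝ, every t > 0 and all x, y ∈ E: exp(−c·(⟪α, w x⟫ + (s/2)·‖α‖²)) · p_t(w x + s • α, y) = exp(−c·⟪α, y⟫ + (c·(s + t·c)/2)·‖α‖²) · p_t(x, w⁻¹ (y − (s + t·c) • α)). -/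
open Real
open scoped RealInnerProductSpace

/-- The duality between reflecting the starting point and reflecting the endpoint in the
reflection principle (Lemma 5.4, Proposition 5.3): for the affine Weyl group element
`g = (w, α)` acting by `g·(a,z) = (a, w z + a • α)` with multiplier
`χ_g(a,z) = exp(−c(⟪α, w z⟫ + (a/2)‖α‖²))`, one has
`χ_g(s,x) · p_t(g·(s,x), y) = χ_{g⁻¹}(s+tc, y)⁻¹ · p_t(x, g⁻¹·(s+tc, y))`. -/
theorem heatKernel_reflection_duality (l : ℕ) (hl : 1 ≤ l)
    (w : EuclideanSpace ℝ (Fin l) ≃ₗᵢ[ℝ] EuclideanSpace ℝ (Fin l))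
    (α : EuclideanSpace ℝ (Fin l)) (s c : ℝ) (t : ℝ) (ht : 0 < t)
    (x y : EuclideanSpace ℝ (Fin l)) :
    Real.exp (-c * (⟪α, w x⟫ + s / 2 * ‖α‖ ^ 2)) * heatKernel l t (w x + s • α) y
      = Real.exp (-c * ⟪α, y⟫ + c * (s + t * c) / 2 * ‖α‖ ^ 2)
          * heatKernel l t x (w.symm (y - (s + t * c) • α)) := by
  -- The isometry `w` turns the displacement for the reflected endpoint into the one for the
  -- reflected starting point, shifted by `-(t * c) • α`.
  have hnorm : ‖w.symm (y - (s + t * c) • α) - x‖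
      = ‖(y - (w x + s • α)) - (t * c) • α‖ := by
    rw [← w.norm_map, map_sub, w.apply_symm_apply]
    congr 1
    module
  -- After division by `2 * t`, the shift changes the Gaussian exponent by exactly the
  -- quotient of the two multipliers.
  have hsq : ‖(y - (w x + s • α)) - (t * c) • α‖ ^ 2
      = ‖y - (w x + s • α)‖ ^ 2 - 2 * (t * c) * (⟪α, y⟫ - ⟪α, w x⟫ - s * ‖α‖ ^ 2)
        + (t * c) ^ 2 * ‖α‖ ^ 2 := by
    rw [norm_sub_sq_real, inner_smul_right, real_inner_comm, inner_sub_right,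
      inner_add_right, inner_smul_right, real_inner_self_eq_norm_sq, norm_smul, mul_pow,
      Real.norm_eq_abs, sq_abs]
    ring
  unfold heatKernel
  rw [hnorm, hsq, mul_left_comm, mul_left_comm (Real.exp (-c * ⟪α, y⟫ + _)),
    ← Real.exp_add, ← Real.exp_add]
  congr 2
  field_simp
  ring
end

section
/- Let l ≥ 1 and let E = EuclideanSpace ℝ (Fin l). Fix ρ̄ ∈ E and for t > 0 define the drifted kernel p_t^ρ(u,v) = (2πt)^(−l/2) · exp(−‖v − t • ρ̄ − u‖²/(2t)) for u, v ∈ E. Then for every linear isometric equivalence w of E, every α ∈ E, all s, c ∈ ℝ, every t > 0 and all x, y ∈ E: exp(⟪ρ̄, (w x + s • α) − x⟫ − c·(⟪α, w x⟫ + (s/2)·‖α‖²)) · p_t^ρ(w x + s • α, y) = exp(⟪ρ̄, y − w⁻¹ (y − (s + t·c) • α)⟫ − c·⟪α, y⟫ + (c·(s + t·c)/2)·‖α‖²) · p_t^ρ(x, w⁻¹ (y − (s + t·c) • α)). -/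
/-!
The drift enters only through a Girsanov factor: expanding the square gives
`p_t^ρ(u,v) = exp(⟪ρ, v - u⟫ - t‖ρ‖²/2) · p_t^0(u,v)` (`driftedHeatKernel_eq_girsanov`). With
`z = w⁻¹(y - (s + tc)α)`, the increments `⟪ρ, (w x + sα) - x⟫ + ⟪ρ, y - (w x + sα)⟫` and
`⟪ρ, y - z⟫ + ⟪ρ, z - x⟫` both telescope to `⟪ρ, y - x⟫`, so the claim reduces to the driftless one.
There `w` is an isometry, hence `‖z - x‖ = ‖D - tcα‖` for `D = y - (w x + sα)`
(`norm_symm_sub_sub_sq`). Dividing by `-2t`, the Gaussian exponent changes by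
`c⟪α, D⟫ - tc²‖α‖²/2`, which is exactly the difference of the driftless multiplier exponents.
-/

open Real
open scoped RealInnerProductSpace

/-- The drifted Gaussian heat kernel
`p_t^ρ(u,v) = (2πt)^(−l/2) · exp(−‖v − t•ρ̄ − u‖²/(2t))` on `EuclideanSpace ℝ (Fin l)`. -/
noncomputable def driftedHeatKernel (l : ℕ) (ρ : EuclideanSpace ℝ (Fin l)) (t : ℝ)
    (u v : EuclideanSpace ℝ (Fin l)) : ℝ :=
  (2 * Real.pi * t) ^ (-(l : ℝ) / 2) * Real.exp (-‖v - t • ρ - u‖ ^ 2 / (2 * t))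

/-- Girsanov's formula for the kernel: a constant drift multiplies the driftless kernel by
the exponential martingale density. -/
lemma driftedHeatKernel_eq_girsanov (l : ℕ) (ρ : EuclideanSpace ℝ (Fin l)) {t : ℝ} (ht : 0 < t)
    (u v : EuclideanSpace ℝ (Fin l)) :
    driftedHeatKernel l ρ t u v
      = Real.exp (⟪ρ, v - u⟫ - t / 2 * ‖ρ‖ ^ 2) * driftedHeatKernel l 0 t u v := by
  have hsq : ‖v - t • ρ - u‖ ^ 2 = ‖v - u‖ ^ 2 - 2 * t * ⟪ρ, v - u⟫ + t ^ 2 * ‖ρ‖ ^ 2 := by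
    rw [sub_right_comm, norm_sub_sq_real, inner_smul_right, real_inner_comm, norm_smul,
      mul_pow, Real.norm_eq_abs, sq_abs]
    ring
  unfold driftedHeatKernel
  rw [smul_zero, sub_zero, mul_left_comm, ← Real.exp_add, hsq]
  congr 2
  field_simp
  ring

/-- Pulling the endpoint back by the isometry `w` turns its distance to `x` into the distance of
`y` to the reflected starting point, up to the shift by `(t * c) • α`. -/
lemma norm_symm_sub_sub_sq {E : Type*} [NormedAddCommGroup E] [InnerProductSpace ℝ E]
    (w : E ≃ₗᵢ[ℝ] E) (α : E) (s c t : ℝ) (x y : E) :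
    ‖w.symm (y - (s + t * c) • α) - x‖ ^ 2
      = ‖y - (w x + s • α)‖ ^ 2 - 2 * (t * c) * ⟪α, y - (w x + s • α)⟫
        + (t * c) ^ 2 * ‖α‖ ^ 2 := by
  have h : w (w.symm (y - (s + t * c) • α) - x) = (y - (w x + s • α)) - (t * c) • α := by
    rw [map_sub, LinearIsometryEquiv.apply_symm_apply]
    module
  rw [← w.norm_map, h, norm_sub_sq_real, inner_smul_right, real_inner_comm, norm_smul,
    mul_pow, Real.norm_eq_abs, sq_abs]
  ring

/-- Term-by-term content of Proposition 5.3 (reflectioncontinue): the duality between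
reflecting the starting point and reflecting the endpoint for the space-time Brownian
motion with drift `ρ̄`, with the drifted multipliers `χ^ρ_g`. -/
theorem driftedHeatKernel_reflection_duality (l : ℕ) (hl : 1 ≤ l)
    (ρ : EuclideanSpace ℝ (Fin l))
    (w : EuclideanSpace ℝ (Fin l) ≃ₗᵢ[ℝ] EuclideanSpace ℝ (Fin l))
    (α : EuclideanSpace ℝ (Fin l)) (s c : ℝ) (t : ℝ) (ht : 0 < t)
    (x y : EuclideanSpace ℝ (Fin l)) :
    Real.exp (⟪ρ, (w x + s • α) - x⟫ - c * (⟪α, w x⟫ + s / 2 * ‖α‖ ^ 2))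
        * driftedHeatKernel l ρ t (w x + s • α) y
      = Real.exp (⟪ρ, y - w.symm (y - (s + t * c) • α)⟫ - c * ⟪α, y⟫
            + c * (s + t * c) / 2 * ‖α‖ ^ 2)
          * driftedHeatKernel l ρ t x (w.symm (y - (s + t * c) • α)) := by
  rw [driftedHeatKernel_eq_girsanov l ρ ht, driftedHeatKernel_eq_girsanov l ρ ht x]
  have hz := norm_symm_sub_sub_sq w α s c t x y
  unfold driftedHeatKernel
  simp only [smul_zero, sub_zero]
  rw [hz]
  generalize w.symm (y - (s + t * c) • α) = z
  simp only [mul_left_comm _ ((2 * Real.pi * t) ^ (-(l : ℝ) / 2)), ← Real.exp_add]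
  congr 2
  -- Only the inner products are expanded; the square `‖y - (w x + s • α)‖ ^ 2` cancels as a whole.
  simp only [inner_sub_right, inner_add_right, inner_smul_right, real_inner_self_eq_norm_sq]
  field_simp
  ring
end
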